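/- Let s > 0 and let (X, d_X) be a separable metric space that is σ-finite with respect to the Hausdorff measure H^s and that can be written as a countable union of compact sets together with an H^s-null set. Let (Y, d_Y) be a metric space of Hausdorff dimension t. If f : X → Y is a measurable surjection (with respect to H^s on X), then there exists a set N ⊆ X with H^s(N) = 0 and dim_H f(N) = t. -/

import Mathlib

open MeasureTheory Set Filter Topology
open scoped NNReal ENNReal

universe u v

/-- A Hausdorff (gauge) function `h : [0,∞) → [0,∞]`: nondecreasing, right-continuous,
and positive on positive arguments. -/
structure IsHausdorffFunction (h : ℝ≥0 → ℝ≥0∞) : Prop where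
  mono : Monotone h
  right_continuous : ∀ t : ℝ≥0, ContinuousWithinAt h (Set.Ici t) t
  pos : ∀ t : ℝ≥0, 0 < t → 0 < h t

/-- `h` is of finite order: `limsup_{t→0+} h(3t)/h(t) < ∞`. -/
def FiniteOrder (h : ℝ≥0 → ℝ≥0∞) : Prop :=
  Filter.limsup (fun t : ℝ≥0 => h (3 * t) / h t) (nhdsWithin 0 (Set.Ioi 0)) < ⊤

/-- The Hausdorff (outer) measure built from the gauge `h`:
`H^h(E) = sup_{δ>0} inf { Σ h(diam Uᵢ) : E ⊆ ⋃ Uᵢ, diam Uᵢ ≤ δ }`. -/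
noncomputable def hausdorffM {Z : Type*} [EMetricSpace Z] (h : ℝ≥0 → ℝ≥0∞) :
    MeasureTheory.OuterMeasure Z :=
  MeasureTheory.OuterMeasure.mkMetric (fun d => h d.toNNReal)

/-- A set `S` is σ-finite with respect to an outer measure `μ` if it is a countable union
of Carathéodory-measurable sets of finite measure. -/
def SigmaFiniteSet {Z : Type*} (μ : MeasureTheory.OuterMeasure Z) (S : Set Z) : Prop :=
  ∃ A : ℕ → Set Z, (∀ n, μ.IsCaratheodory (A n) ∧ μ (A n) < ⊤) ∧ S = ⋃ n, A n

/-- A metric space has finite structural dimension if for every `ξ > 0` there are `N` and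
`δ₀ > 0` such that every set of diameter `δ ≤ δ₀` can be covered by `N` sets of diameter
at most `ξ·δ`. -/
def FiniteStructuralDim (Z : Type*) [EMetricSpace Z] : Prop :=
  ∀ ξ : ℝ≥0, 0 < ξ → ∃ (N : ℕ) (δ₀ : ℝ≥0), 0 < δ₀ ∧
    ∀ s : Set Z, EMetric.diam s ≤ δ₀ →
      ∃ U : Fin N → Set Z, s ⊆ ⋃ i, U i ∧ ∀ i, EMetric.diam (U i) ≤ ξ * EMetric.diam s

/-- Property (H) for a subspace `Y` of the complete separable metric space `Z`. -/
structure PropertyH {Z : Type*} [MetricSpace Z] (Y : Set Z) (h : ℝ≥0 → ℝ≥0∞) : Prop where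
  complete : CompleteSpace Z
  separable : TopologicalSpace.SeparableSpace Z
  analytic : MeasureTheory.AnalyticSet Y
  hausdorff : IsHausdorffFunction h
  cont : Continuous h
  zero : h 0 = 0
  alt : FiniteOrder h ∨ FiniteStructuralDim Z ∨ ∀ x y z : Z, dist x z ≤ max (dist x y) (dist y z)

/-- Property (H∞): property (H) together with non-σ-finiteness of `Y` w.r.t. `H^h`. -/
def PropertyHInf {Z : Type*} [MetricSpace Z] (Y : Set Z) (h : ℝ≥0 → ℝ≥0∞) : Prop :=
  PropertyH Y h ∧ ¬ SigmaFiniteSet (hausdorffM h) Y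

/-- Property (Aκ): `X` is a union of κ-many measurable sets of finite measure, and
κ-many null sets always union to a null set. -/
def PropertyA {X : Type u} (μ : MeasureTheory.OuterMeasure X) (κ : Cardinal.{u}) : Prop :=
  (∃ (ι : Type u) (A : ι → Set X), Cardinal.mk ι = κ ∧ (⋃ i, A i) = Set.univ ∧
      ∀ i, μ.IsCaratheodory (A i) ∧ μ (A i) < ⊤) ∧
  ∀ (ι : Type u) (A : ι → Set X), Cardinal.mk ι = κ → (∀ i, μ (A i) = 0) → μ (⋃ i, A i) = 0

/-- A set is perfect if it is closed and every open set meeting it meets it in an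
infinite set. -/
def PerfectSet {X : Type*} [TopologicalSpace X] (C : Set X) : Prop :=
  IsClosed C ∧ ∀ O : Set X, IsOpen O → (O ∩ C).Nonempty → (O ∩ C).Infinite

/-- The gauge `d ↦ d^s`. -/
noncomputable def sGauge (s : ℝ≥0) : ℝ≥0 → ℝ≥0∞ := fun d => (d : ℝ≥0∞) ^ (s : ℝ)

/-- Hausdorff–Besicovitch dimension: the supremum of all `s ≥ 0` with `H^{d^s}(E) > 0`. -/
noncomputable def hDim {Z : Type*} [EMetricSpace Z] (E : Set Z) : ℝ≥0∞ :=
  ⨆ (s : ℝ≥0) (_ : 0 < hausdorffM (sGauge s) E), (s : ℝ≥0∞)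

/-!
Let `ν` be the image under `f` of a finite measure equivalent to the given measure on `X`. On each
standard Borel piece of `X` the map `f` is continuous for some finer Polish topology, which makes
`ν` inner regular with respect to compact sets.

For `q < dimH Y`, the points `y` where `ν (closedBall y ρ) / ρ ^ q` is unbounded form an
`H ^ q`-null set, by a covering argument, so the remaining points form a set of the full dimension.
If that set is `ν`-null, pull it back. Otherwise `ν` restricted to a compact part of it satisfies a
Frostman bound with exponent `q`. Halving this measure on every cell of finer and finer partitions
gives decreasing compact sets `B n` with `ν (⋂ n, B n) = 0`, while the renormalised measures
`2 ^ n • ν.restrict (B n)` satisfy, for any given `r < q`, a bound with exponent `r` that is uniform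
in `n`. By the mass distribution principle `⋂ n, B n` then has positive `H ^ r` measure.
-/

section HausdorffMeasure

lemma hausdorffM_sGauge {Z : Type*} [EMetricSpace Z] [MeasurableSpace Z] [BorelSpace Z] (s : ℝ≥0) :
    (hausdorffM (sGauge s) : OuterMeasure Z) = (μH[s] : Measure Z).toOuterMeasure := by
  have hgauge : (fun d : ℝ≥0∞ ↦ sGauge s d.toNNReal) =ᶠ[𝓝 0] fun d ↦ d ^ (s : ℝ) := by
    filter_upwards [Iio_mem_nhds ENNReal.zero_lt_top] with d hd
    rw [sGauge, ENNReal.coe_toNNReal (ne_of_lt hd)]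
  rw [Measure.hausdorffMeasure, Measure.mkMetric_toOuterMeasure]
  exact le_antisymm (OuterMeasure.mkMetric_mono hgauge.le)
    (OuterMeasure.mkMetric_mono hgauge.symm.le)

lemma hDim_eq_dimH {Z : Type*} [EMetricSpace Z] (E : Set Z) : hDim E = dimH E := by
  borelize Z
  simp only [hDim, hausdorffM_sGauge, pos_iff_ne_zero]
  refine le_antisymm (iSup₂_le fun s hs ↦ le_dimH_of_hausdorffMeasure_ne_zero hs) ?_
  refine le_of_forall_lt fun a ha ↦ ?_
  obtain ⟨s, has, hs⟩ := ENNReal.lt_iff_exists_nnreal_btwn.1 ha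
  exact has.trans_le (le_iSup₂_of_le s (by simp [hausdorffMeasure_of_lt_dimH hs]) le_rfl)

variable {Y : Type*} [MetricSpace Y]

lemma exists_cover_tsum_ediam_rpow_lt [MeasurableSpace Y] [BorelSpace Y] {r : ℝ} {S : Set Y}
    {a δ : ℝ≥0∞} (hS : μH[r] S < a) (hδ : 0 < δ) :
    ∃ t : ℕ → Set Y, S ⊆ ⋃ n, t n ∧ (∀ n, Metric.ediam (t n) ≤ δ) ∧
      ∑' n, ⨆ _ : (t n).Nonempty, Metric.ediam (t n) ^ r < a := by
  rw [Measure.hausdorffMeasure_apply] at hS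
  simpa only [iInf_lt_iff, exists_prop] using (le_iSup₂ δ hδ).trans_lt hS

lemma secondCountableTopology_of_hausdorffMeasure_ne_top [MeasurableSpace Y] [BorelSpace Y] {d : ℝ}
    (h : μH[d] (univ : Set Y) ≠ ∞) : SecondCountableTopology Y := by
  refine Metric.secondCountable_of_almost_dense_set fun ε hε ↦ ?_
  obtain ⟨t, hcov, hdiam, -⟩ :=
    exists_cover_tsum_ediam_rpow_lt h.lt_top (ENNReal.ofReal_pos.2 hε)
  choose g hg using fun n : {n // (t n).Nonempty} ↦ n.2
  refine ⟨range g, countable_range g, fun x ↦ ?_⟩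
  obtain ⟨n, hn⟩ := mem_iUnion.1 (hcov (mem_univ x))
  refine ⟨g ⟨n, x, hn⟩, mem_range_self _, ?_⟩
  rw [← edist_le_ofReal hε.le]
  exact (Metric.edist_le_ediam_of_mem hn (hg ⟨n, x, hn⟩)).trans (hdiam n)

lemma secondCountableTopology_of_dimH_ne_top (h : dimH (univ : Set Y) ≠ ∞) :
    SecondCountableTopology Y := by
  borelize Y
  obtain ⟨d, hd, -⟩ := ENNReal.lt_iff_exists_nnreal_btwn.1 h.lt_top
  refine secondCountableTopology_of_hausdorffMeasure_ne_top (d := d) ?_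
  simp [hausdorffMeasure_of_dimH_lt hd]

end HausdorffMeasure

section MassDistribution

variable {Y : Type*} [MetricSpace Y]

lemma exists_isOpen_superset_rpow_lt {r : ℝ} (hr : 0 < r) {s : Set Y} {δ : ℝ≥0}
    (hs : Metric.ediam s < δ) {ε : ℝ≥0∞} (hε : ε ≠ 0) :
    ∃ (U : Set Y) (d : ℝ≥0), IsOpen U ∧ s ⊆ U ∧ Metric.ediam U ≤ d ∧ 0 < d ∧ d ≤ δ ∧
      (d : ℝ≥0∞) ^ r < Metric.ediam s ^ r + ε := by
  lift Metric.ediam s to ℝ≥0 using hs.ne_top with a ha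
  rw [ENNReal.coe_lt_coe] at hs
  have hcont : ContinuousAt (fun d : ℝ≥0 ↦ (d : ℝ≥0∞) ^ r) a := by fun_prop
  have hlt : (a : ℝ≥0∞) ^ r < (a : ℝ≥0∞) ^ r + ε :=
    ENNReal.lt_add_right (ENNReal.rpow_ne_top_of_nonneg hr.le ENNReal.coe_ne_top) hε
  have hnear := (hcont.eventually_lt_const hlt).filter_mono (nhdsWithin_le_nhds (s := Ioi a))
  obtain ⟨d, hd, had, hdδ⟩ := (hnear.and (Ioo_mem_nhdsGT hs)).exists
  obtain ⟨e, rfl⟩ := exists_add_of_le had.le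
  have he : 0 < e := pos_of_lt_add_right had
  refine ⟨Metric.thickening (e / 2 : ℝ≥0) s, a + e, Metric.isOpen_thickening,
    Metric.self_subset_thickening (by positivity) s, ?_, by positivity, hdδ.le, ha ▸ hd⟩
  refine (Metric.ediam_thickening_le _).trans_eq ?_
  rw [← ha]
  norm_cast
  rw [mul_div_cancel₀ _ two_ne_zero]

variable [MeasurableSpace Y] [BorelSpace Y]

lemma exists_isOpen_cover_tsum_rpow_lt {r : ℝ} (hr : 0 < r) {S : Set Y} {a : ℝ≥0∞}
    (hS : μH[r] S < a) {δ : ℝ≥0} (hδ : 0 < δ) :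
    ∃ (U : ℕ → Set Y) (d : ℕ → ℝ≥0), (∀ i, IsOpen (U i)) ∧ S ⊆ ⋃ i, U i ∧
      (∀ i, Metric.ediam (U i) ≤ d i ∧ 0 < d i ∧ d i ≤ δ) ∧
      ∑' i, (d i : ℝ≥0∞) ^ r < a := by
  obtain ⟨t, hcov, hdiam, hsum⟩ :=
    exists_cover_tsum_ediam_rpow_lt hS (ENNReal.half_pos (ENNReal.coe_pos.2 hδ).ne')
  obtain ⟨ε, hε, hεsum⟩ := ENNReal.exists_pos_sum_of_countable (tsub_pos_of_lt hsum).ne' ℕ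
  have hlt (i) : Metric.ediam (t i) < δ :=
    (hdiam i).trans_lt (ENNReal.half_lt_self (by simpa using hδ.ne') ENNReal.coe_ne_top)
  choose U d hUo htU hUd hd0 hdδ hdr using fun i ↦
    exists_isOpen_superset_rpow_lt hr (hlt i) (ENNReal.coe_ne_zero.2 (hε i).ne')
  refine ⟨U, d, hUo, hcov.trans (iUnion_mono htU), fun i ↦ ⟨hUd i, hd0 i, hdδ i⟩, ?_⟩
  have hterm (i) : (⨆ _ : (t i).Nonempty, Metric.ediam (t i) ^ r) = Metric.ediam (t i) ^ r := by
    rcases (t i).eq_empty_or_nonempty with h | h <;> simp [h, hr]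
  simp only [hterm] at hsum hεsum
  calc ∑' i, (d i : ℝ≥0∞) ^ r ≤ ∑' i, (Metric.ediam (t i) ^ r + ε i) :=
        ENNReal.tsum_le_tsum fun i ↦ (hdr i).le
    _ = ∑' i, Metric.ediam (t i) ^ r + ∑' i, (ε i : ℝ≥0∞) := ENNReal.tsum_add
    _ < ∑' i, Metric.ediam (t i) ^ r + (a - ∑' i, Metric.ediam (t i) ^ r) :=
        ENNReal.add_lt_add_left hsum.ne_top hεsum
    _ = a := add_tsub_cancel_of_le hsum.le

lemma hausdorffMeasure_iInter_ne_zero {r : ℝ} (hr : 0 < r) {B : ℕ → Set Y}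
    (hB : ∀ n, IsCompact (B n)) (hanti : Antitone B) {κ : ℕ → Measure Y} {c C : ℝ≥0∞} {δ : ℝ≥0}
    (hc : c ≠ 0) (hC : C ≠ ∞) (hδ : 0 < δ) (hκB : ∀ n, c ≤ κ n (B n))
    (hκ : ∀ n (E : Set Y) (d : ℝ≥0), Metric.ediam E ≤ d → 0 < d → d ≤ δ → κ n E ≤ C * d ^ r) :
    μH[r] (⋂ n, B n) ≠ 0 := by
  intro h0
  obtain ⟨U, d, hUo, hcov, hUd, hsum⟩ := exists_isOpen_cover_tsum_rpow_lt hr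
    (h0.trans_lt (ENNReal.div_pos hc hC)) hδ
  obtain ⟨n, hn⟩ := exists_subset_nhds_of_isCompact hanti.directed_ge hB
    fun x hx ↦ (isOpen_iUnion hUo).mem_nhds (hcov hx)
  refine lt_irrefl c ?_
  calc c ≤ κ n (B n) := hκB n
    _ ≤ ∑' i, κ n (U i) := (measure_mono hn).trans (measure_iUnion_le U)
    _ ≤ ∑' i, C * (d i : ℝ≥0∞) ^ r :=
        ENNReal.tsum_le_tsum fun i ↦ hκ n _ _ (hUd i).1 (hUd i).2.1 (hUd i).2.2
    _ = (∑' i, (d i : ℝ≥0∞) ^ r) * C := by rw [ENNReal.tsum_mul_left, mul_comm]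
    _ < c := ENNReal.mul_lt_of_lt_div hsum

end MassDistribution

section Growth

variable {Y : Type*} [MetricSpace Y] [MeasurableSpace Y]

/-- The points at which `ν` has growth of order `q` with constant `C`: the condition of Frostman's
lemma on all balls centred there. -/
def growthSet (ν : Measure Y) (q : ℝ) (C : ℝ≥0) : Set Y :=
  {x | ∀ ρ : ℝ≥0, 0 < ρ → ν (Metric.closedBall x ρ) ≤ C * (ρ : ℝ≥0∞) ^ q}

lemma le_mul_rpow_of_forall_pos_add_le {a : ℝ≥0∞} {C d : ℝ≥0} {q : ℝ}
    (h : ∀ ε : ℝ≥0, 0 < ε → a ≤ C * ((d + ε : ℝ≥0) : ℝ≥0∞) ^ q) : a ≤ C * (d : ℝ≥0∞) ^ q := by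
  have hcont : Continuous fun ε : ℝ≥0 ↦ C * ((d + ε : ℝ≥0) : ℝ≥0∞) ^ q :=
    (ENNReal.continuous_const_mul ENNReal.coe_ne_top).comp (by fun_prop)
  have hlim := (hcont.tendsto 0).mono_left (nhdsWithin_le_nhds (s := Ioi 0))
  rw [add_zero] at hlim
  exact ge_of_tendsto hlim (eventually_mem_of_tendsto_nhdsWithin tendsto_id |>.mono h)

lemma isClosed_growthSet (ν : Measure Y) (q : ℝ) (C : ℝ≥0) : IsClosed (growthSet ν q C) := by
  refine isClosed_of_closure_subset fun x hx ρ hρ ↦ le_mul_rpow_of_forall_pos_add_le fun ε hε ↦ ?_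
  obtain ⟨y, hy, hxy⟩ := Metric.mem_closure_iff.1 hx ε hε
  refine (measure_mono (Metric.closedBall_subset_closedBall' ?_)).trans (hy (ρ + ε) (by positivity))
  push_cast
  gcongr

lemma measure_le_of_mem_growthSet {ν : Measure Y} {q : ℝ} {C : ℝ≥0} {x : Y}
    (hx : x ∈ growthSet ν q C) {E : Set Y} (hxE : x ∈ E) {d : ℝ≥0} (hd : Metric.ediam E ≤ d) :
    ν E ≤ C * (d : ℝ≥0∞) ^ q := by
  refine le_mul_rpow_of_forall_pos_add_le fun ε hε ↦ ?_
  refine (measure_mono fun y hy ↦ ?_).trans (hx (d + ε) (by positivity))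
  have hyx : edist y x ≤ (d + ε : ℝ≥0) :=
    (Metric.edist_le_ediam_of_mem hy hxE).trans (hd.trans (by simp))
  rwa [edist_nndist, ENNReal.coe_le_coe] at hyx

variable [BorelSpace Y]

lemma hausdorffMeasure_eq_zero_of_forall_cover {ι : Type*} {q : ℝ} (hq : 0 < q) {S : Set Y}
    (h : ∀ ε : ℝ≥0∞, ε ≠ 0 → ∃ (u : Set ι) (t : ι → Set Y), u.Countable ∧ S ⊆ ⋃ i ∈ u, t i ∧
      ∑' i : u, Metric.ediam (t i) ^ q ≤ ε) : μH[q] S = 0 := by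
  choose u t hu hcov hsum using fun n : ℕ ↦ h (n : ℝ≥0∞)⁻¹ (by simp)
  have (n : ℕ) : Countable (u n) := hu n
  have hdiam (n : ℕ) (i : u n) : Metric.ediam (t n i) ≤ ((n : ℝ≥0∞)⁻¹) ^ q⁻¹ := by
    rw [← ENNReal.rpow_le_rpow_iff hq, ENNReal.rpow_inv_rpow hq.ne']
    exact (ENNReal.le_tsum i).trans (hsum n)
  have hmesh : Tendsto (fun n : ℕ ↦ ((n : ℝ≥0∞)⁻¹) ^ q⁻¹) atTop (𝓝 0) := by
    simpa [hq] using ENNReal.tendsto_inv_nat_nhds_zero.ennrpow_const q⁻¹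
  refine le_antisymm ?_ bot_le
  calc μH[q] S ≤ liminf (fun n ↦ ∑' i : u n, Metric.ediam (t n i) ^ q) atTop :=
        Measure.hausdorffMeasure_le_liminf_tsum q S _ hmesh (fun n (i : u n) ↦ t n i)
          (.of_forall hdiam) (.of_forall fun n ↦ by simpa only [biUnion_eq_iUnion] using hcov n)
    _ ≤ liminf (fun n : ℕ ↦ (n : ℝ≥0∞)⁻¹) atTop := liminf_le_liminf (.of_forall hsum)
    _ = 0 := ENNReal.tendsto_inv_nat_nhds_zero.liminf_eq

lemma exists_disjoint_cover_compl_growthSet (ν : Measure Y) [IsFiniteMeasure ν] {q : ℝ} (hq : 0 < q)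
    {C : ℝ≥0} (hC : 0 < C) : ∃ (u : Set Y) (ρ : Y → ℝ≥0), u.Countable ∧
      u.PairwiseDisjoint (fun x ↦ Metric.closedBall x (ρ x)) ∧
      (growthSet ν q C)ᶜ ⊆ ⋃ x ∈ u, Metric.closedBall x (4 * ρ x) ∧
      ∀ x ∈ u, C * (ρ x : ℝ≥0∞) ^ q < ν (Metric.closedBall x (ρ x)) := by
  have hbad : ∀ x ∈ (growthSet ν q C)ᶜ, ∃ ρ : ℝ≥0,
      C * (ρ : ℝ≥0∞) ^ q < ν (Metric.closedBall x ρ) := fun x hx ↦ by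
    simp only [growthSet, mem_compl_iff, mem_ofPred_eq, not_forall, not_le] at hx
    exact hx.imp fun ρ hρ ↦ hρ.2
  choose! ρ hρ using hbad
  have hρR : ∀ x ∈ (growthSet ν q C)ᶜ, (ρ x : ℝ) ≤ ((ν univ / C) ^ q⁻¹).toReal := fun x hx ↦ by
    rw [← ENNReal.coe_toReal]
    refine ENNReal.toReal_mono (by finiteness) ((ENNReal.le_rpow_inv_iff hq).2 ?_)
    rw [ENNReal.le_div_iff_mul_le (by simp [hC.ne']) (by simp), mul_comm]
    exact (hρ x hx).le.trans (measure_mono (subset_univ _))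
  obtain ⟨u, hu, hdisj, hcov⟩ := Vitali.exists_disjoint_subfamily_covering_enlargement_closedBall
    (growthSet ν q C)ᶜ id (fun x ↦ ρ x) _ hρR 4 (by norm_num)
  refine ⟨u, ρ, ?_, hdisj, fun x hx ↦ ?_, fun x hx ↦ hρ x (hu hx)⟩
  · have hpos : {x : u | 0 < ν (Metric.closedBall x (ρ x))} = univ :=
      eq_univ_of_forall fun x ↦ bot_lt_of_lt (hρ x (hu x.2))
    rw [← countable_coe_iff, ← countable_univ_iff, ← hpos]
    exact Measure.countable_meas_pos_of_disjoint_iUnion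
      (fun x ↦ Metric.isClosed_closedBall.measurableSet) hdisj.subtype
  · obtain ⟨b, hb, hsub⟩ := hcov x hx
    exact mem_biUnion hb (hsub (Metric.mem_closedBall_self (ρ x).2))

lemma hausdorffMeasure_compl_iUnion_growthSet (ν : Measure Y) [IsFiniteMeasure ν] {q : ℝ}
    (hq : 0 < q) : μH[q] (⋃ C : ℕ, growthSet ν q C)ᶜ = 0 := by
  refine hausdorffMeasure_eq_zero_of_forall_cover (ι := Y) hq fun ε hε ↦ ?_
  obtain ⟨n, hn⟩ := ENNReal.exists_nat_mul_gt hε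
    (ENNReal.mul_ne_top (ENNReal.rpow_ne_top_of_nonneg hq.le (ENNReal.ofNat_ne_top (n := 8)))
      (measure_ne_top ν univ))
  have hn0 : 0 < n := Nat.pos_of_ne_zero fun h ↦ by simp [h] at hn
  obtain ⟨u, ρ, hu, hdisj, hcov, hρ⟩ :=
    exists_disjoint_cover_compl_growthSet ν hq (Nat.cast_pos.2 hn0 : (0 : ℝ≥0) < n)
  refine ⟨u, fun x ↦ Metric.closedBall x (4 * ρ x), hu,
    (compl_subset_compl.2 (subset_iUnion _ n)).trans hcov, ?_⟩
  have hdiam (x : Y) : Metric.ediam (Metric.closedBall x (4 * ρ x)) ≤ 8 * ρ x := by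
    rw [show (4 * ρ x : ℝ) = (4 * ρ x : ℝ≥0) by simp, ← Metric.closedEBall_coe]
    refine Metric.ediam_closedEBall_le.trans_eq ?_
    push_cast
    ring
  refine (ENNReal.mul_le_mul_iff_right (by simpa using hn0.ne') (ENNReal.natCast_ne_top n)).1 ?_
  calc n * ∑' x : u, Metric.ediam (Metric.closedBall (x : Y) (4 * ρ x)) ^ q
      ≤ n * ∑' x : u, (8 * (ρ x : ℝ≥0∞)) ^ q := by gcongr with x; exact hdiam x
    _ = 8 ^ q * ∑' x : u, n * (ρ x : ℝ≥0∞) ^ q := by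
        simp_rw [ENNReal.mul_rpow_of_nonneg _ _ hq.le, ENNReal.tsum_mul_left]
        ring
    _ ≤ 8 ^ q * ∑' x : u, ν (Metric.closedBall x (ρ x)) := by
        gcongr with x
        exact (hρ x x.2).le
    _ ≤ 8 ^ q * ν univ := by
        gcongr
        exact tsum_measure_le_measure_univ
          (fun x ↦ Metric.isClosed_closedBall.measurableSet.nullMeasurableSet)
          (hdisj.subtype.mono fun _ _ h ↦ h.aedisjoint)
    _ ≤ n * ε := hn.le

end Growth

section Halving

lemma continuous_measureReal_Iic (ρ : Measure ℝ) [IsFiniteMeasure ρ] [NullSingletonClass ρ] :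
    Continuous fun t ↦ ρ.real (Iic t) := by
  have hprim : (fun t ↦ ρ.real (Iic t)) =
      fun t ↦ ρ.real (Iic 0) + ∫ _ in (0 : ℝ)..t, (1 : ℝ) ∂ρ := by
    ext t
    rw [← intervalIntegral.integral_Iic_sub_Iic (by simp) (by simp)]
    simp [Measure.real]
  rw [hprim]
  exact continuous_const.add (intervalIntegral.continuous_primitive (by simp) 0)

lemma exists_measureReal_Iic_eq (ρ : Measure ℝ) [IsFiniteMeasure ρ] [NullSingletonClass ρ] {c : ℝ}
    (hc : c ∈ Ioo 0 (ρ.real univ)) : ∃ t, ρ.real (Iic t) = c := by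
  have htop : Tendsto (fun t ↦ ρ.real (Iic t)) atTop (𝓝 (ρ.real univ)) :=
    (ENNReal.tendsto_toReal (measure_ne_top _ _)).comp (tendsto_measure_Iic_atTop ρ)
  have hbot : Tendsto (fun t ↦ ρ.real univ - ρ.real (Ici t)) atBot (𝓝 0) := by
    rw [← sub_self (ρ.real univ)]
    exact tendsto_const_nhds.sub
      ((ENNReal.tendsto_toReal (measure_ne_top _ _)).comp (tendsto_measure_Ici_atBot ρ))
  have hcompl (t : ℝ) : ρ.real univ - ρ.real (Ici t) = ρ.real (Iic t) := by
    rw [← measureReal_compl measurableSet_Ici, compl_Ici, measureReal_congr Iio_ae_eq_Iic]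
  simp only [hcompl] at hbot
  exact mem_range_of_exists_le_of_exists_ge (continuous_measureReal_Iic ρ)
    (hbot.eventually_le_const hc.1).exists (htop.eventually_const_le hc.2).exists

variable {α : Type*} [MeasurableSpace α] [MeasurableSpace.CountablySeparated α] {μ : Measure α}
  [IsFiniteMeasure μ] [NullSingletonClass μ] {S : Set α}

lemma exists_subset_two_mul_measure_eq (hS : MeasurableSet S) :
    ∃ A ⊆ S, MeasurableSet A ∧ 2 * μ A = μ S := by
  rcases eq_or_ne (μ S) 0 with h0 | h0
  · exact ⟨∅, empty_subset _, .empty, by simp [h0]⟩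
  obtain ⟨e, he, he_inj⟩ := MeasurableSpace.measurable_injection_nat_bool_of_countablySeparated α
  have hemb := measurableEmbedding_embeddingReal (ℕ → Bool)
  let g : α → ℝ := embeddingReal (ℕ → Bool) ∘ e
  have hg : Measurable g := hemb.measurable.comp he
  let ρ : Measure ℝ := (μ.restrict S).map g
  have hρ : NullSingletonClass ρ := ⟨fun y ↦ by
    rw [Measure.map_apply hg (measurableSet_singleton y)]
    exact (subsingleton_singleton.preimage (hemb.injective.comp he_inj)).measure_zero _⟩
  have hρuniv : ρ univ = μ S := by simp [ρ, Measure.map_apply hg]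
  have hpos : 0 < ρ.real univ := ENNReal.toReal_pos (hρuniv ▸ h0) (measure_ne_top _ _)
  obtain ⟨t, ht⟩ := exists_measureReal_Iic_eq ρ ⟨half_pos hpos, half_lt_self hpos⟩
  have hmeas : MeasurableSet (g ⁻¹' Iic t) := hg measurableSet_Iic
  refine ⟨g ⁻¹' Iic t ∩ S, inter_subset_right, hmeas.inter hS, ?_⟩
  rw [← Measure.restrict_apply hmeas, ← Measure.map_apply hg measurableSet_Iic, ← hρuniv,
    ← ENNReal.toReal_eq_toReal_iff' (by finiteness) (by finiteness), ENNReal.toReal_mul,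
    ENNReal.toReal_ofNat]
  change 2 * ρ.real (Iic t) = ρ.real univ
  rw [ht, mul_div_cancel₀ _ two_ne_zero]

variable {ι : Type*} [Countable ι] [MeasurableSpace ι] [MeasurableSingletonClass ι] {ψ : α → ι}

lemma exists_subset_two_mul_measure_inter_preimage_eq (hS : MeasurableSet S) (hψ : Measurable ψ) :
    ∃ A ⊆ S, MeasurableSet A ∧ ∀ T, 2 * μ (A ∩ ψ ⁻¹' T) = μ (S ∩ ψ ⁻¹' T) := by
  have hcell (i) : MeasurableSet (S ∩ ψ ⁻¹' {i}) := hS.inter (hψ (measurableSet_singleton i))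
  choose A hAS hA hμA using fun i ↦ exists_subset_two_mul_measure_eq (μ := μ) (hcell i)
  have hAm : MeasurableSet (⋃ i, A i) := .iUnion hA
  refine ⟨⋃ i, A i, iUnion_subset fun i ↦ (hAS i).trans inter_subset_left, hAm, fun T ↦ ?_⟩
  have hAi (i) : ψ ⁻¹' {i} ∩ ⋃ j, A j = A i := by
    refine Subset.antisymm (fun x hx ↦ ?_) fun x hx ↦ ⟨(hAS i hx).2, mem_iUnion_of_mem i hx⟩
    obtain ⟨j, hj⟩ := mem_iUnion.1 hx.2
    obtain rfl : j = i := (hAS j hj).2.symm.trans hx.1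
    exact hj
  have hmap : (2 : ℝ≥0∞) • (μ.restrict (⋃ i, A i)).map ψ = (μ.restrict S).map ψ :=
    Measure.ext_of_singleton fun i ↦ by
      have hi := hψ (measurableSet_singleton i)
      simp [Measure.map_apply hψ, Measure.restrict_apply hi, hAi, hμA, inter_comm S]
  have hT := T.to_countable.measurableSet
  simpa [Measure.map_apply hψ hT, Measure.restrict_apply (hψ hT), inter_comm] using
    congrArg (· T) hmap

variable [TopologicalSpace α] [TopologicalSpace.MetrizableSpace α] [BorelSpace α] {B : Set α}
  {c : ℝ≥0∞}

lemma exists_isCompact_subset_two_mul_measure_le (hB : IsCompact B) (hc : c < μ B)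
    (hψ : Measurable ψ) :
    ∃ B' ⊆ B, IsCompact B' ∧ c < 2 * μ B' ∧ ∀ T, 2 * μ (B' ∩ ψ ⁻¹' T) ≤ μ (B ∩ ψ ⁻¹' T) := by
  obtain ⟨A, hAB, hA, hAT⟩ :=
    exists_subset_two_mul_measure_inter_preimage_eq (μ := μ) hB.measurableSet hψ
  have hcA : c < 2 * μ A := by simpa using hc.trans_eq (by simpa using (hAT univ).symm)
  rw [mul_comm, ← ENNReal.div_lt_iff (by simp) (by simp)] at hcA
  obtain ⟨B', hB'A, hB', hcB'⟩ := hA.exists_lt_isClosed_of_ne_top (measure_ne_top μ A) hcA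
  rw [ENNReal.div_lt_iff (by simp) (by simp), mul_comm] at hcB'
  exact ⟨B', hB'A.trans hAB, hB.of_isClosed_subset hB' (hB'A.trans hAB), hcB',
    fun T ↦ (hAT T).symm ▸ by gcongr⟩

lemma exists_antitone_isCompact_two_mul_measure_le (hB : IsCompact B) (hc : c < μ B)
    {φ : ℕ → α → ι} (hφ : ∀ n, Measurable (φ n)) :
    ∃ D : ℕ → Set α, D 0 = B ∧ Antitone D ∧ (∀ n, IsCompact (D n)) ∧ (∀ n, c < 2 ^ n * μ (D n)) ∧
      ∀ n, ∀ i ≤ n, ∀ T, 2 * μ (D (n + 1) ∩ φ i ⁻¹' T) ≤ μ (D n ∩ φ i ⁻¹' T) := by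
  have hstep (n : ℕ) (D : Set α) (hD : IsCompact D ∧ c < 2 ^ n * μ D) :
      ∃ D' ⊆ D, (IsCompact D' ∧ c < 2 ^ (n + 1) * μ D') ∧
        ∀ i ≤ n, ∀ T, 2 * μ (D' ∩ φ i ⁻¹' T) ≤ μ (D ∩ φ i ⁻¹' T) := by
    have hcD : c / 2 ^ n < μ D := by
      rw [ENNReal.div_lt_iff (by simp) (by simp), mul_comm]
      exact hD.2
    obtain ⟨D', hD'D, hD', hcD', hT⟩ := exists_isCompact_subset_two_mul_measure_le hD.1 hcD
      (measurable_pi_lambda (fun x (i : Fin (n + 1)) ↦ φ i x) fun i ↦ hφ i)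
    rw [ENNReal.div_lt_iff (by simp) (by simp), mul_comm, ← mul_assoc, ← pow_succ] at hcD'
    exact ⟨D', hD'D, ⟨hD', hcD'⟩, fun i hi T ↦ hT ((· ⟨i, Nat.lt_succ_of_le hi⟩) ⁻¹' T)⟩
  choose! g hgsub hg hgT using hstep
  let D : ℕ → Set α := fun n ↦ n.rec B g
  have hD (n : ℕ) : IsCompact (D n) ∧ c < 2 ^ n * μ (D n) := by
    induction n with
    | zero => exact ⟨hB, by simpa [D] using hc⟩
    | succ n ih => exact hg n (D n) ih
  exact ⟨D, rfl, antitone_nat_of_succ_le fun n ↦ hgsub n (D n) (hD n), fun n ↦ (hD n).1,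
    fun n ↦ (hD n).2, fun n ↦ hgT n (D n) (hD n)⟩

end Halving

lemma two_pow_mul_measure_inter_preimage_le {α ι : Type*} [MeasurableSpace α] {μ : Measure α}
    {φ : ℕ → α → ι} {D : ℕ → Set α}
    (hD : ∀ n, ∀ i ≤ n, ∀ T, 2 * μ (D (n + 1) ∩ φ i ⁻¹' T) ≤ μ (D n ∩ φ i ⁻¹' T))
    (m n : ℕ) (T : Set ι) : 2 ^ m * μ (D m ∩ φ n ⁻¹' T) ≤ 2 ^ n * μ (φ n ⁻¹' T) := by
  rcases le_total m n with hmn | hnm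
  · gcongr
    · norm_num
    · exact inter_subset_right
  · induction m, hnm using Nat.le_induction with
    | base => gcongr; exact inter_subset_right
    | succ m hnm ih =>
      calc 2 ^ (m + 1) * μ (D (m + 1) ∩ φ n ⁻¹' T)
          = 2 ^ m * (2 * μ (D (m + 1) ∩ φ n ⁻¹' T)) := by ring
        _ ≤ 2 ^ m * μ (D m ∩ φ n ⁻¹' T) := by gcongr; exact hD m n hnm T
        _ ≤ 2 ^ n * μ (φ n ⁻¹' T) := ih

lemma measure_iInter_eq_zero_of_two_pow_mul_le {α : Type*} [MeasurableSpace α] {μ : Measure α}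
    [IsFiniteMeasure μ] {D : ℕ → Set α} (hD : ∀ n, 2 ^ n * μ (D n) ≤ μ univ) :
    μ (⋂ n, D n) = 0 := by
  by_contra h0
  obtain ⟨n, hn⟩ := ENNReal.exists_nat_mul_gt h0 (measure_ne_top μ univ)
  refine hn.not_ge ?_
  calc n * μ (⋂ n, D n) ≤ 2 ^ n * μ (D n) := by
        gcongr
        · exact_mod_cast n.lt_two_pow_self.le
        · exact iInter_subset D n
    _ ≤ μ univ := hD n

lemma exists_nat_pow_le_and_two_pow_mul_rpow_le {q r : ℝ} (hrq : r < q) :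
    ∃ η : ℝ≥0, 0 < η ∧ ∀ d : ℝ≥0, 0 < d → d ≤ 1 →
      ∃ n : ℕ, η ^ n ≤ d ∧ 2 ^ n * d ^ q ≤ 2 * d ^ r := by
  have hqr : 0 < q - r := sub_pos.2 hrq
  let η : ℝ≥0 := 2⁻¹ ^ (q - r)⁻¹
  have hη : 0 < η := NNReal.rpow_pos (by norm_num)
  have hη1 : η < 1 := NNReal.rpow_lt_one (by norm_num) (inv_pos.2 hqr)
  have hηq : η ^ (q - r) = 2⁻¹ := NNReal.rpow_inv_rpow hqr.ne' _
  refine ⟨η, hη, fun d hd hd1 ↦ ?_⟩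
  obtain ⟨n, hnd, hdn⟩ := exists_nat_pow_near_of_lt_one hd hd1 hη hη1
  have hscale : 2 ^ n * d ^ (q - r) ≤ 1 :=
    calc 2 ^ n * d ^ (q - r) ≤ 2 ^ n * (η ^ n) ^ (q - r) := by gcongr
      _ = 1 := by rw [← NNReal.rpow_natCast_mul, mul_comm (n : ℝ), NNReal.rpow_mul_natCast, hηq,
        ← mul_pow, mul_inv_cancel₀ two_ne_zero, one_pow]
  refine ⟨n + 1, hnd.le, ?_⟩
  calc 2 ^ (n + 1) * d ^ q = 2 * (2 ^ n * d ^ (q - r)) * d ^ r := by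
        rw [NNReal.rpow_sub hd.ne', pow_succ]
        field_simp
    _ ≤ 2 * 1 * d ^ r := by gcongr
    _ = 2 * d ^ r := by rw [mul_one]

section Mesh

variable {Y : Type*} [PseudoEMetricSpace Y]

lemma ediam_preimage_image_le {ι : Type*} {φ : Y → ι} {δ : ℝ≥0∞}
    (hφ : ∀ x y, φ x = φ y → edist x y ≤ δ) (E : Set Y) :
    Metric.ediam (φ ⁻¹' (φ '' E)) ≤ Metric.ediam E + 2 * δ := by
  refine Metric.ediam_le fun x hx y hy ↦ ?_
  obtain ⟨x', hx', hxx'⟩ := hx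
  obtain ⟨y', hy', hyy'⟩ := hy
  calc edist x y ≤ edist x x' + edist x' y' + edist y' y := edist_triangle4 _ _ _ _
    _ ≤ δ + Metric.ediam E + δ := by
      gcongr
      · exact hφ _ _ hxx'.symm
      · exact Metric.edist_le_ediam_of_mem hx' hy'
      · exact hφ _ _ hyy'
    _ = Metric.ediam E + 2 * δ := by ring

variable [MeasurableSpace Y] {μ : Measure Y} {q r : ℝ} {C : ℝ≥0}

lemma nullSingletonClass_of_measure_le_rpow (hq : 0 < q)
    (hμ : ∀ E (d : ℝ≥0), Metric.ediam E ≤ d → μ E ≤ C * d ^ q) : NullSingletonClass μ :=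
  ⟨fun x ↦ by simpa [ENNReal.zero_rpow_of_pos hq] using hμ {x} 0 (by simp)⟩

lemma two_pow_mul_measure_inter_le {d δ : ℝ≥0} {ι : Type*} {φ : Y → ι} {D : Set Y} {m n : ℕ}
    (hμ : ∀ E (d : ℝ≥0), Metric.ediam E ≤ d → μ E ≤ C * d ^ q)
    (hφ : ∀ x y, φ x = φ y → edist x y ≤ δ)
    (hD : ∀ T, 2 ^ m * μ (D ∩ φ ⁻¹' T) ≤ 2 ^ n * μ (φ ⁻¹' T))
    (hδd : δ ≤ d) (hd : d ≠ 0) (hqr : 2 ^ n * d ^ q ≤ 2 * d ^ r) {E : Set Y}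
    (hE : Metric.ediam E ≤ d) :
    2 ^ m * μ (D ∩ E) ≤ (2 * 3 ^ q * C : ℝ≥0) * d ^ r := by
  have hdiam : Metric.ediam (φ ⁻¹' (φ '' E)) ≤ (3 * d : ℝ≥0) :=
    calc Metric.ediam (φ ⁻¹' (φ '' E)) ≤ Metric.ediam E + 2 * δ :=
          ediam_preimage_image_le hφ E
      _ ≤ d + 2 * d := by gcongr
      _ = (3 * d : ℝ≥0) := by push_cast; ring
  calc 2 ^ m * μ (D ∩ E) ≤ 2 ^ m * μ (D ∩ φ ⁻¹' (φ '' E)) := by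
        gcongr
        exact subset_preimage_image _ _
    _ ≤ 2 ^ n * μ (φ ⁻¹' (φ '' E)) := hD _
    _ ≤ 2 ^ n * (C * (3 * d : ℝ≥0) ^ q) := by gcongr; exact hμ _ _ hdiam
    _ = (3 ^ q * C * (2 ^ n * d ^ q) : ℝ≥0) := by
        rw [← ENNReal.coe_rpow_of_ne_zero (by positivity), NNReal.mul_rpow]
        push_cast
        ring
    _ ≤ (3 ^ q * C * (2 * d ^ r) : ℝ≥0) := by gcongr
    _ = (2 * 3 ^ q * C : ℝ≥0) * d ^ r := by
        rw [← ENNReal.coe_rpow_of_ne_zero hd]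
        push_cast
        ring

end Mesh

section CantorSet

variable {Y : Type*} [MetricSpace Y] [MeasurableSpace Y] [BorelSpace Y]

lemma exists_measurable_nat_edist_le [TopologicalSpace.SeparableSpace Y] {δ : ℝ≥0} (hδ : 0 < δ) :
    ∃ φ : Y → ℕ, Measurable φ ∧ ∀ x y, φ x = φ y → edist x y ≤ δ := by
  classical
  cases isEmpty_or_nonempty Y
  · exact ⟨fun _ ↦ 0, measurable_const, fun x ↦ isEmptyElim x⟩
  let u := TopologicalSpace.denseSeq Y
  have hu (x : Y) : ∃ n, dist x (u n) < δ / 2 :=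
    (TopologicalSpace.denseRange_denseSeq Y).exists_dist_lt x (half_pos hδ)
  refine ⟨fun x ↦ Nat.find (hu x), measurable_find hu fun k ↦ ?_, fun x y hxy ↦ ?_⟩
  · exact (isOpen_lt (by fun_prop) (by fun_prop)).measurableSet
  · have hx := Nat.find_spec (hu x)
    have hy := Nat.find_spec (hu y)
    simp only at hxy
    rw [← hxy] at hy
    rw [edist_le_coe, ← NNReal.coe_le_coe, coe_nndist]
    linarith [dist_triangle_right x y (u (Nat.find (hu x)))]

lemma exists_subset_measure_eq_zero_hausdorffMeasure_ne_zero [SecondCountableTopology Y]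
    {μ : Measure Y} [IsFiniteMeasure μ] {q r : ℝ} {C : ℝ≥0} (hr : 0 < r) (hrq : r < q)
    (hμ : ∀ E (d : ℝ≥0), Metric.ediam E ≤ d → μ E ≤ C * d ^ q) {K : Set Y} (hK : IsCompact K)
    (hμK : μ K ≠ 0) : ∃ B ⊆ K, μ B = 0 ∧ μH[r] B ≠ 0 := by
  have := nullSingletonClass_of_measure_le_rpow (hr.trans hrq) hμ
  obtain ⟨η, hη, hscale⟩ := exists_nat_pow_le_and_two_pow_mul_rpow_le hrq
  choose φ hφ hφη using fun n : ℕ ↦ exists_measurable_nat_edist_le (Y := Y) (pow_pos hη n)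
  obtain ⟨c, hc0, hcK⟩ := exists_between (pos_iff_ne_zero.2 hμK)
  obtain ⟨D, rfl, hanti, hDc, hcD, hD⟩ := exists_antitone_isCompact_two_mul_measure_le hK hcK hφ
  refine ⟨⋂ n, D n, iInter_subset D 0, ?_, ?_⟩
  · refine measure_iInter_eq_zero_of_two_pow_mul_le fun m ↦ ?_
    simpa using two_pow_mul_measure_inter_preimage_le hD m 0 univ
  · refine hausdorffMeasure_iInter_ne_zero (κ := fun m ↦ (2 : ℝ≥0∞) ^ m • μ.restrict (D m))
      (C := (2 * 3 ^ q * C : ℝ≥0)) (δ := 1) hr hDc hanti hc0.ne' ENNReal.coe_ne_top one_pos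
      (fun m ↦ ?_) fun m E d hE hd hd1 ↦ ?_
    · simpa using (hcD m).le
    · obtain ⟨n, hηd, hqr⟩ := hscale d hd hd1
      rw [Measure.smul_apply, Measure.restrict_apply' (hDc m).measurableSet, inter_comm,
        smul_eq_mul]
      exact two_pow_mul_measure_inter_le hμ (hφη n)
        (two_pow_mul_measure_inter_preimage_le hD m n) hηd hd.ne' hqr hE

end CantorSet

section NullSets

variable {Y : Type*} [MetricSpace Y] [MeasurableSpace Y] [BorelSpace Y] [SecondCountableTopology Y]
  {ν : Measure Y} [IsFiniteMeasure ν] [ν.InnerRegular]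

lemma exists_measure_eq_zero_hausdorffMeasure_ne_zero_of_growthSet {q r : ℝ} {C : ℝ≥0} (hr : 0 < r)
    (hrq : r < q) (hC : ν (growthSet ν q C) ≠ 0) : ∃ B, ν B = 0 ∧ μH[r] B ≠ 0 := by
  obtain ⟨K, hKC, hK, hνK⟩ :=
    (isClosed_growthSet ν q C).measurableSet.exists_lt_isCompact (pos_iff_ne_zero.2 hC)
  have hbound (E : Set Y) (d : ℝ≥0) (hE : Metric.ediam E ≤ d) : ν.restrict K E ≤ C * d ^ q := by
    rw [Measure.restrict_apply' hK.measurableSet]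
    rcases (E ∩ K).eq_empty_or_nonempty with hEK | ⟨x, hxE, hxK⟩
    · simp [hEK]
    · exact (measure_mono inter_subset_left).trans
        (measure_le_of_mem_growthSet (hKC hxK) hxE hE)
  obtain ⟨B, hBK, hB0, hBr⟩ := exists_subset_measure_eq_zero_hausdorffMeasure_ne_zero hr hrq hbound
    hK (by simpa using hνK.ne')
  refine ⟨B, ?_, hBr⟩
  rwa [Measure.restrict_apply' hK.measurableSet, inter_eq_left.2 hBK] at hB0

lemma exists_measure_eq_zero_lt_dimH {r : ℝ≥0∞} (hr : r < dimH (univ : Set Y)) :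
    ∃ B, ν B = 0 ∧ r < dimH B := by
  obtain ⟨p, hrp, hpY⟩ := ENNReal.lt_iff_exists_nnreal_btwn.1 hr
  obtain ⟨q, hpq, hqY⟩ := ENNReal.lt_iff_exists_nnreal_btwn.1 hpY
  rw [ENNReal.coe_lt_coe] at hpq
  by_cases hnull : ∀ C : ℕ, ν (growthSet ν q C) = 0
  · refine ⟨⋃ C : ℕ, growthSet ν q C, measure_iUnion_null hnull, hr.trans_le ?_⟩
    have hcompl : dimH (⋃ C : ℕ, growthSet ν q C)ᶜ ≤ q := dimH_le_of_hausdorffMeasure_ne_top <|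
      ne_of_eq_of_ne (hausdorffMeasure_compl_iUnion_growthSet ν (NNReal.coe_pos.2 (pos_of_gt hpq)))
        ENNReal.zero_ne_top
    rw [← union_compl_self (⋃ C : ℕ, growthSet ν q C), dimH_union] at hqY ⊢
    exact max_le le_rfl (hcompl.trans ((lt_max_iff.1 hqY).resolve_right hcompl.not_gt).le)
  · push Not at hnull
    obtain ⟨C, hC⟩ := hnull
    have hp : (0 : ℝ) < p := by exact_mod_cast pos_of_gt hrp
    obtain ⟨B, hB0, hB⟩ := exists_measure_eq_zero_hausdorffMeasure_ne_zero_of_growthSet hp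
      (NNReal.coe_lt_coe.2 hpq) hC
    exact ⟨B, hB0, hrp.trans_le (le_dimH_of_hausdorffMeasure_ne_zero hB)⟩

lemma exists_measure_eq_zero_dimH_eq_dimH_univ (ν : Measure Y) [IsFiniteMeasure ν]
    [ν.InnerRegular] : ∃ B, ν B = 0 ∧ dimH B = dimH (univ : Set Y) := by
  rcases eq_zero_or_pos (dimH (univ : Set Y)) with h0 | hpos
  · exact ⟨∅, measure_empty, by simp [h0]⟩
  obtain ⟨u, -, hu, hulim⟩ := exists_seq_strictMono_tendsto' hpos
  choose B hB0 hB using fun n ↦ exists_measure_eq_zero_lt_dimH (ν := ν) (hu n).2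
  refine ⟨⋃ n, B n, measure_iUnion_null hB0, (dimH_mono (subset_univ _)).antisymm ?_⟩
  exact le_of_tendsto' hulim fun n ↦ (hB n).le.trans (dimH_mono (subset_iUnion B n))

end NullSets

section ImageRegularity

variable {Y : Type*} [TopologicalSpace Y] [SecondCountableTopology Y] [MeasurableSpace Y]
  [BorelSpace Y]

lemma innerRegular_map_of_standardBorelSpace {α : Type*} [MeasurableSpace α] [StandardBorelSpace α]
    {μ : Measure α} [IsFiniteMeasure μ] {f : α → Y} (hf : AEMeasurable f μ) :
    (μ.map f).InnerRegular := by
  rw [Measure.map_congr hf.ae_eq_mk]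
  let std := upgradeStandardBorel α
  obtain ⟨τ, hτ, hcont, hpolish⟩ := hf.measurable_mk.exists_continuous
  have hborel : @BorelSpace α τ _ := @BorelSpace.mk α τ _ <|
    (eq_borel_upgradeStandardBorel α).trans (borel_eq_borel_of_le hpolish std.toPolishSpace hτ).symm
  exact Measure.InnerRegular.map_of_continuous hcont

variable {X : Type*} [MeasurableSpace X] {μ : Measure X} [IsFiniteMeasure μ] {f : X → Y}

lemma innerRegular_map_of_measure_compl_eq_zero {S : Set X} [StandardBorelSpace S]
    (hS : MeasurableSet S) (hμS : μ Sᶜ = 0) (hf : AEMeasurable f μ) : (μ.map f).InnerRegular := by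
  have hμ : (μ.comap ((↑) : S → X)).map (↑) = μ := by
    rw [map_comap_subtype_coe hS]
    exact Measure.restrict_eq_self_of_ae_mem hμS
  rw [← hμ] at hf ⊢
  rw [AEMeasurable.map_map_of_aemeasurable hf measurable_subtype_coe.aemeasurable]
  exact innerRegular_map_of_standardBorelSpace (hf.comp_measurable measurable_subtype_coe)

lemma innerRegular_map_of_measure_compl_iUnion_eq_zero {S : ℕ → Set X}
    [∀ n, StandardBorelSpace (S n)] (hS : ∀ n, MeasurableSet (S n)) (hμS : μ (⋃ n, S n)ᶜ = 0)
    (hf : AEMeasurable f μ) : (μ.map f).InnerRegular := by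
  have hμ : Measure.sum (fun n ↦ μ.restrict (disjointed S n)) = μ := by
    rw [← Measure.restrict_iUnion (disjoint_disjointed S) (.disjointed hS), iUnion_disjointed]
    exact Measure.restrict_eq_self_of_ae_mem hμS
  have hpiece (n : ℕ) : ((μ.restrict (disjointed S n)).map f).InnerRegular :=
    innerRegular_map_of_measure_compl_eq_zero (hS n)
      (measure_mono_null (compl_subset_compl.2 (disjointed_subset S n))
        (ae_restrict_mem (.disjointed hS n))) hf.restrict
  rw [← hμ] at hf
  rw [← hμ, Measure.map_sum hf]
  infer_instance

end ImageRegularity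

section Caratheodory

variable {X : Type*} [MeasurableSpace X] {μ : Measure X} {S : Set X}

lemma nullMeasurableSet_of_isCaratheodory_of_ne_top (hS : μ.toOuterMeasure.IsCaratheodory S)
    (hμS : μ S ≠ ∞) : NullMeasurableSet S μ := by
  have hsplit : μ S = μ S + μ (toMeasurable μ S \ S) := by
    simpa [inter_eq_self_of_subset_right (subset_toMeasurable μ S)] using hS (toMeasurable μ S)
  refine (measurableSet_toMeasurable μ S).nullMeasurableSet.congr (ae_eq_set.2 ⟨?_, ?_⟩)
  · exact (ENNReal.add_right_inj hμS).1 (hsplit.symm.trans (add_zero _).symm)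
  · simp [sdiff_eq_empty.2 (subset_toMeasurable μ S)]

lemma nullMeasurableSet_of_isCaratheodory [SigmaFinite μ] (hS : μ.toOuterMeasure.IsCaratheodory S) :
    NullMeasurableSet S μ := by
  rw [← inter_univ S, ← iUnion_spanningSets μ, inter_iUnion]
  refine .iUnion fun n ↦ nullMeasurableSet_of_isCaratheodory_of_ne_top
    (μ.toOuterMeasure.isCaratheodory_inter hS ?_)
    (measure_inter_lt_top_of_right_ne_top (measure_spanningSets_lt_top μ n).ne).ne
  exact le_toOuterMeasure_caratheodory μ _ (measurableSet_spanningSets μ n)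

lemma aemeasurable_of_isCaratheodory [SigmaFinite μ] {Y : Type*} [TopologicalSpace Y]
    [SecondCountableTopology Y] [MeasurableSpace Y] [BorelSpace Y] {f : X → Y}
    (hf : ∀ O, IsOpen O → μ.toOuterMeasure.IsCaratheodory (f ⁻¹' O)) : AEMeasurable f μ := by
  have hopen (O : Set Y) (hO : IsOpen O) : NullMeasurableSet (f ⁻¹' O) μ :=
    nullMeasurableSet_of_isCaratheodory (hf O hO)
  have hnull : NullMeasurable f μ := measurable_of_isOpen (δ := NullMeasurableSpace X μ) hopen
  exact hnull.aemeasurable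

lemma sigmaFinite_of_sigmaFiniteSet_univ (hμ : SigmaFiniteSet μ.toOuterMeasure univ) :
    SigmaFinite μ := by
  obtain ⟨A, hA, hAuniv⟩ := hμ
  exact ⟨⟨⟨A, fun _ ↦ trivial, fun n ↦ (hA n).2, hAuniv.symm⟩⟩⟩

end Caratheodory

section Surjection

lemma standardBorelSpace_of_isCompact {X : Type*} [MetricSpace X] [MeasurableSpace X]
    [BorelSpace X] {K : Set X} (hK : IsCompact K) : StandardBorelSpace K := by
  have := isCompact_iff_compactSpace.1 hK
  infer_instance

lemma exists_measure_eq_zero_dimH_image_eq_dimH_univ {X : Type*} [MeasurableSpace X]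
    {μ : Measure X} [SFinite μ] {S : ℕ → Set X} [∀ n, StandardBorelSpace (S n)]
    (hS : ∀ n, MeasurableSet (S n)) (hμS : μ (⋃ n, S n)ᶜ = 0) {Y : Type*} [MetricSpace Y]
    [SecondCountableTopology Y] [MeasurableSpace Y] [BorelSpace Y] {f : X → Y}
    (hf : AEMeasurable f μ) (hsurj : Function.Surjective f) :
    ∃ N, μ N = 0 ∧ dimH (f '' N) = dimH (univ : Set Y) := by
  have hac : μ.toFinite ≪ μ := toFinite_absolutelyContinuous μ
  have hf' : AEMeasurable f μ.toFinite := hf.mono_ac hac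
  have : (μ.toFinite.map f).InnerRegular :=
    innerRegular_map_of_measure_compl_iUnion_eq_zero hS (hac hμS) hf'
  obtain ⟨B, hB, hdim⟩ := exists_measure_eq_zero_dimH_eq_dimH_univ (μ.toFinite.map f)
  refine ⟨f ⁻¹' B, toFinite_apply_eq_zero_iff.1 (Measure.preimage_null_of_map_null hf' hB), ?_⟩
  rwa [image_preimage_eq B hsurj]

theorem statement_16_general {X : Type*} [MeasurableSpace X] (μ : Measure X) [SigmaFinite μ]
    {Y : Type*} [MetricSpace Y] (t : ℝ≥0)
    (hdecomp : ∃ (S : ℕ → Set X) (N : Set X),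
      (∀ n, MeasurableSet (S n) ∧ StandardBorelSpace (S n)) ∧ μ N = 0 ∧ univ = (⋃ n, S n) ∪ N)
    (hdim : hDim (univ : Set Y) = t) (f : X → Y) (hsurj : Function.Surjective f)
    (hmeas : ∀ O, IsOpen O → μ.toOuterMeasure.IsCaratheodory (f ⁻¹' O)) :
    ∃ N, μ N = 0 ∧ hDim (f '' N) = t := by
  borelize Y
  simp only [hDim_eq_dimH] at hdim ⊢
  obtain ⟨S, N, hS, hN, hSN⟩ := hdecomp
  have := fun n ↦ (hS n).2
  have := secondCountableTopology_of_dimH_ne_top (hdim ▸ ENNReal.coe_ne_top)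
  have hμS : μ (⋃ n, S n)ᶜ = 0 := measure_mono_null (compl_subset_iff_union.2 hSN.symm) hN
  exact hdim ▸ exists_measure_eq_zero_dimH_image_eq_dimH_univ (fun n ↦ (hS n).1) hμS
    (aemeasurable_of_isCaratheodory hmeas) hsurj

end Surjection

/-- Corollary `Dimension`. -/
theorem statement_16 {X : Type*} [MetricSpace X] [TopologicalSpace.SeparableSpace X]
    {Y : Type*} [MetricSpace Y]
    (s : ℝ≥0) (hs : 0 < s) (t : ℝ≥0)
    (hsf : SigmaFiniteSet (hausdorffM (sGauge s)) (Set.univ : Set X))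
    (hdecomp : ∃ (K : ℕ → Set X) (N : Set X), (∀ n, IsCompact (K n)) ∧
      hausdorffM (sGauge s) N = 0 ∧ Set.univ = (⋃ n, K n) ∪ N)
    (hdim : hDim (Set.univ : Set Y) = (t : ℝ≥0∞))
    (f : X → Y) (hsurj : Function.Surjective f)
    (hmeas : ∀ O : Set Y, IsOpen O →
      (hausdorffM (sGauge s)).IsCaratheodory (f ⁻¹' O)) :
    ∃ N : Set X, hausdorffM (sGauge s) N = 0 ∧ hDim (f '' N) = (t : ℝ≥0∞) := by
  borelize X
  simp only [hausdorffM_sGauge] at *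
  obtain ⟨K, N, hK, hKN⟩ := hdecomp
  have := sigmaFinite_of_sigmaFiniteSet_univ hsf
  exact statement_16_general μH[s] t ⟨K, N, fun n ↦ ⟨(hK n).measurableSet,
    standardBorelSpace_of_isCompact (hK n)⟩, hKN⟩ hdim f hsurj hmeas
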